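/- arXiv:1801.00120 — 4 statements merged into one kernel-verified Lean document; each statement's English description precedes it below -/
import Mathlib

section
/- Let H ∈ (1/2, 3/4). For every continuous function φ : [0,1]² → ℝ, lim_{n→∞} (1/n) Σ_{j=1}^n Σ_{l=1}^n ρ_H(j−l)² · φ((j−1)/n, (l−1)/n) = ( Σ_{k ∈ ℤ} ρ_H(k)² ) · ∫₀¹ φ(t,t) dt. -/
open Filter

/-- The fBm autocorrelation sequence `ρ_H(k) = (1/2)(|k+1|^{2H} − 2|k|^{2H} + |k−1|^{2H})`. -/
noncomputable def rhoH (H : ℝ) (k : ℤ) : ℝ :=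
  (1/2) * (|(k:ℝ) + 1| ^ (2 * H) - 2 * |(k:ℝ)| ^ (2 * H) + |(k:ℝ) - 1| ^ (2 * H))

lemma rpow_mvt (p x y : ℝ) (hx : 0 < x) (hxy : x < y) :
    ∃ c ∈ Set.Ioo x y, y ^ p - x ^ p = p * c ^ (p - 1) * (y - x) := by
  obtain ⟨c, hc, h⟩ := exists_hasDerivAt_eq_slope (fun t : ℝ => t ^ p)
    (fun t => p * t ^ (p - 1)) hxy
    (fun t ht => (Real.continuousAt_rpow_const t p
      (Or.inl (ne_of_gt (lt_of_lt_of_le hx ht.1)))).continuousWithinAt)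
    (fun t ht => Real.hasDerivAt_rpow_const (Or.inl (ne_of_gt (lt_trans hx ht.1))))
  refine ⟨c, hc, ?_⟩
  have : y - x ≠ 0 := by linarith
  rw [h]
  field_simp

lemma second_diff (a x : ℝ) (ha : a ∈ Set.Ioo (1 : ℝ) (3/2)) (hx : 0 < x) :
    |(x + 2) ^ a - 2 * (x + 1) ^ a + x ^ a| ≤ 4 * x ^ (a - 2) := by
  obtain ⟨ha1, ha2⟩ := ha
  obtain ⟨c, hc, h1⟩ := rpow_mvt a (x + 1) (x + 2) (by linarith) (by linarith)
  obtain ⟨d, hd, h2⟩ := rpow_mvt a x (x + 1) (by linarith) (by linarith)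
  obtain ⟨e, he, h3⟩ := rpow_mvt (a - 1) d c (by linarith [hd.1]) (by linarith [hd.2, hc.1])
  obtain ⟨hc1, hc2⟩ := hc
  obtain ⟨hd1, hd2⟩ := hd
  obtain ⟨he1, he2⟩ := he
  have e1 : (x + 2) ^ a - 2 * (x + 1) ^ a + x ^ a
      = a * ((a - 1) * e ^ (a - 2) * (c - d)) := by
    have : a - 1 - 1 = a - 2 := by ring
    rw [this] at h3
    rw [← h3]
    linear_combination h1 - h2
  have e2 : e ^ (a - 2) ≤ x ^ (a - 2) :=
    Real.rpow_le_rpow_of_nonpos hx (by linarith) (by linarith)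
  have e3 : 0 ≤ e ^ (a - 2) := Real.rpow_nonneg (by linarith) _
  rw [e1, abs_of_nonneg]
  · have : a * ((a - 1) * e ^ (a - 2) * (c - d)) = (a * ((a - 1) * (c - d))) * e ^ (a - 2) := by
      ring
    rw [this]
    refine mul_le_mul ?_ e2 e3 (by norm_num)
    have h5 : (a - 1) * (c - d) ≤ 1 / 2 * 2 := mul_le_mul (by linarith) (by linarith)
      (by linarith) (by norm_num)
    nlinarith
  · have : 0 ≤ c - d := by linarith
    have : 0 ≤ a - 1 := by linarith
    positivity

lemma summable_rho (H : ℝ) (hH : H ∈ Set.Ioo (1/2 : ℝ) (3/4)) :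
    Summable (fun k : ℤ => (rhoH H k) ^ 2) := by
  have hnat : Summable (fun k : ℕ => (rhoH H (k : ℤ)) ^ 2) := by
    rw [← summable_nat_add_iff 2]
    have hs : Summable (fun k : ℕ => 4 * ((k + 1 : ℕ) : ℝ) ^ (4 * H - 4)) := by
      apply Summable.mul_left
      exact (summable_nat_add_iff (f := fun k : ℕ => (k : ℝ) ^ (4 * H - 4)) 1).2
        (Real.summable_nat_rpow.2 (by linarith [hH.2]))
    refine Summable.of_nonneg_of_le (fun k => sq_nonneg _) (fun k => ?_) hs
    have hx : (0 : ℝ) < ((k + 1 : ℕ) : ℝ) := by positivity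
    have h := second_diff (2 * H) ((k + 1 : ℕ) : ℝ)
      ⟨by linarith [hH.1], by linarith [hH.2]⟩ hx
    have e : rhoH H ((k + 2 : ℕ) : ℤ) = (1 / 2) * ((((k + 1 : ℕ) : ℝ) + 2) ^ (2 * H)
        - 2 * (((k + 1 : ℕ) : ℝ) + 1) ^ (2 * H) + ((k + 1 : ℕ) : ℝ) ^ (2 * H)) := by
      unfold rhoH
      have a1 : |(((k + 2 : ℕ) : ℤ) : ℝ) + 1| = ((k + 1 : ℕ) : ℝ) + 2 := by
        rw [abs_of_nonneg (by positivity)]; push_cast; ring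
      have a2 : |(((k + 2 : ℕ) : ℤ) : ℝ)| = ((k + 1 : ℕ) : ℝ) + 1 := by
        rw [abs_of_nonneg (by positivity)]; push_cast; ring
      have a3 : |(((k + 2 : ℕ) : ℤ) : ℝ) - 1| = ((k + 1 : ℕ) : ℝ) := by
        have : (((k + 2 : ℕ) : ℤ) : ℝ) - 1 = ((k + 1 : ℕ) : ℝ) := by push_cast; ring
        rw [this, abs_of_nonneg (by positivity)]
      rw [a1, a2, a3]
    have h2 : |rhoH H ((k + 2 : ℕ) : ℤ)| ≤ 2 * ((k + 1 : ℕ) : ℝ) ^ (2 * H - 2) := by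
      rw [e, abs_mul, abs_of_pos (by norm_num : (0 : ℝ) < 1 / 2)]
      linarith
    calc (rhoH H ((k + 2 : ℕ) : ℤ)) ^ 2 = |rhoH H ((k + 2 : ℕ) : ℤ)| ^ 2 := (sq_abs _).symm
      _ ≤ (2 * ((k + 1 : ℕ) : ℝ) ^ (2 * H - 2)) ^ 2 := by gcongr
      _ = 4 * ((k + 1 : ℕ) : ℝ) ^ (4 * H - 4) := by
        rw [mul_pow, ← Real.rpow_mul_natCast hx.le]
        norm_num
        congr 1
        ring
  refine Summable.of_nat_of_neg hnat ?_
  refine hnat.congr (fun k => ?_)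
  congr 1
  unfold rhoH
  have a1 : |((-(k : ℤ) : ℤ) : ℝ) + 1| = |((k : ℤ) : ℝ) - 1| := by
    rw [← abs_neg]; congr 1; push_cast; ring
  have a2 : |((-(k : ℤ) : ℤ) : ℝ) - 1| = |((k : ℤ) : ℝ) + 1| := by
    rw [← abs_neg]; congr 1; push_cast; ring
  have a3 : |((-(k : ℤ) : ℤ) : ℝ)| = |((k : ℤ) : ℝ)| := by
    push_cast; rw [abs_neg]
  rw [a1, a2, a3]
  ring

/-- Riemann sums. -/
lemma riemann (g : ℝ → ℝ) (hg : ContinuousOn g (Set.Icc 0 1)) :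
    Tendsto (fun n : ℕ => (1 / (n : ℝ)) * ∑ j ∈ Finset.Icc 1 n, g (((j : ℝ) - 1) / n)) atTop
      (nhds (∫ t in (0:ℝ)..1, g t)) := by
  have huc := isCompact_Icc.uniformContinuousOn_of_continuous hg
  rw [Metric.uniformContinuousOn_iff] at huc
  rw [Metric.tendsto_atTop]
  intro ε hε
  obtain ⟨δ, hδ, hd⟩ := huc (ε / 2) (by positivity)
  obtain ⟨N, hN⟩ := exists_nat_gt (1 / δ)
  refine ⟨N + 1, fun n hn => ?_⟩
  have hn0 : (0 : ℝ) < n := by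
    have : 0 < n := by omega
    exact_mod_cast this
  have hnδ : 1 / (n : ℝ) < δ := by
    have : (N : ℝ) ≤ n := by exact_mod_cast (by omega : N ≤ n)
    rw [div_lt_iff₀ hn0]
    rw [div_lt_iff₀ hδ] at hN
    nlinarith
  have hsub : ∀ j < n, Set.Icc ((j : ℝ) / n) (((j + 1 : ℕ) : ℝ) / n) ⊆ Set.Icc 0 1 := by
    intro j hj
    apply Set.Icc_subset_Icc (by positivity)
    rw [div_le_one hn0]
    exact_mod_cast hj
  have hle : ∀ j : ℕ, (j : ℝ) / n ≤ ((j + 1 : ℕ) : ℝ) / n := fun j => by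
    gcongr; simp
  have hint : ∀ j < n, IntervalIntegrable g MeasureTheory.volume ((j : ℝ) / n)
      (((j + 1 : ℕ) : ℝ) / n) := by
    intro j hj
    apply ContinuousOn.intervalIntegrable
    rw [Set.uIcc_of_le (hle j)]
    exact hg.mono (hsub j hj)
  have hsum := intervalIntegral.sum_integral_adjacent_intervals
    (a := fun j : ℕ => (j : ℝ) / n) (n := n) (f := g) (μ := MeasureTheory.volume) hint
  simp only [Nat.cast_zero, zero_div, div_self hn0.ne'] at hsum
  have hre : ∑ j ∈ Finset.Icc 1 n, g (((j : ℝ) - 1) / n)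
      = ∑ j ∈ Finset.range n, g ((j : ℝ) / n) := by
    rw [Finset.range_eq_Ico, ← Finset.Ico_add_one_right_eq_Icc,
      Finset.sum_Ico_eq_sum_range, Finset.sum_Ico_eq_sum_range]
    simp
  rw [hre, ← hsum, Finset.mul_sum, Real.dist_eq, ← Finset.sum_sub_distrib]
  have hterm : ∀ j ∈ Finset.range n, |1 / (n : ℝ) * g ((j : ℝ) / n)
      - ∫ t in ((j : ℝ) / n)..(((j + 1 : ℕ) : ℝ) / n), g t| ≤ ε / 2 * (1 / n) := by
    intro j hj
    rw [Finset.mem_range] at hj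
    have hlen : ((j + 1 : ℕ) : ℝ) / n - (j : ℝ) / n = 1 / n := by
      push_cast; ring
    have hconst : 1 / (n : ℝ) * g ((j : ℝ) / n)
        = ∫ t in ((j : ℝ) / n)..(((j + 1 : ℕ) : ℝ) / n), g ((j : ℝ) / n) := by
      rw [intervalIntegral.integral_const, hlen, smul_eq_mul]
    rw [hconst, ← intervalIntegral.integral_sub (by simp) (hint j hj)]
    have := intervalIntegral.norm_integral_le_of_norm_le_const
      (a := (j : ℝ) / n) (b := ((j + 1 : ℕ) : ℝ) / n) (C := ε / 2)
      (f := fun t => g ((j : ℝ) / n) - g t) (by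
        intro t ht
        rw [Set.uIoc_of_le (hle j)] at ht
        have ht' : t ∈ Set.Icc ((j : ℝ) / n) (((j + 1 : ℕ) : ℝ) / n) := ⟨ht.1.le, ht.2⟩
        rw [← dist_eq_norm]
        refine (hd _ (hsub j hj ⟨le_rfl, hle j⟩) _ (hsub j hj ht') ?_).le
        rw [Real.dist_eq, abs_sub_comm, abs_of_nonneg (by linarith [ht.1])]
        linarith [ht.2])
    rw [hlen, abs_of_pos (by positivity), Real.norm_eq_abs] at this
    exact this
  calc _ ≤ ∑ j ∈ Finset.range n, ε / 2 * (1 / (n : ℝ)) :=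
        (Finset.abs_sum_le_sum_abs _ _).trans (Finset.sum_le_sum hterm)
    _ = ε / 2 := by
        rw [Finset.sum_const, Finset.card_range, nsmul_eq_mul]; field_simp
    _ < ε := by linarith

/-- The mean of `φ` along the `k`-th diagonal. -/
noncomputable def diagMean (φ : ℝ × ℝ → ℝ) (n : ℕ) (k : ℤ) : ℝ :=
  (1 / (n : ℝ)) * ∑ j ∈ Finset.Icc 1 n, ∑ l ∈ Finset.Icc 1 n,
    if k = (j : ℤ) - (l : ℤ) then φ (((j:ℝ) - 1) / n, ((l:ℝ) - 1) / n) else 0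

lemma grid_mem (n j : ℕ) (hj : j ∈ Finset.Icc 1 n) : ((j : ℝ) - 1) / n ∈ Set.Icc (0 : ℝ) 1 := by
  rw [Finset.mem_Icc] at hj
  have h1 : (1 : ℝ) ≤ j := by exact_mod_cast hj.1
  have h2 : (j : ℝ) ≤ n := by exact_mod_cast hj.2
  constructor
  · apply div_nonneg <;> linarith
  · rw [div_le_one (by linarith)]; linarith

lemma inner_good (n j m : ℕ) (k : ℤ) (f : ℕ → ℝ) (hm : m ∈ Finset.Icc 1 n)
    (h : k = (j : ℤ) - m) :
    (∑ l ∈ Finset.Icc 1 n, if k = (j : ℤ) - (l : ℤ) then f l else 0) = f m := by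
  rw [Finset.sum_eq_single_of_mem m hm]
  · simp [h]
  · intro l _ hl
    rw [if_neg]
    omega

lemma inner_bad (n j : ℕ) (k : ℤ) (f : ℕ → ℝ)
    (h : ¬ ∃ m ∈ Finset.Icc 1 n, k = (j : ℤ) - (m : ℕ)) :
    (∑ l ∈ Finset.Icc 1 n, if k = (j : ℤ) - (l : ℤ) then f l else 0) = 0 := by
  apply Finset.sum_eq_zero
  intro l hl
  rw [if_neg]
  exact fun hk => h ⟨l, hl, hk⟩

lemma diagMean_bound (φ : ℝ × ℝ → ℝ) (M : ℝ) (hM0 : 0 ≤ M)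
    (hM : ∀ x ∈ Set.Icc (0:ℝ) 1 ×ˢ Set.Icc (0:ℝ) 1, |φ x| ≤ M) (n : ℕ) (k : ℤ) :
    |diagMean φ n k| ≤ M := by
  unfold diagMean
  rcases Nat.eq_zero_or_pos n with rfl | hn
  · simpa using hM0
  have hn0 : (0 : ℝ) < n := by exact_mod_cast hn
  rw [abs_mul, abs_of_pos (by positivity)]
  have : |∑ j ∈ Finset.Icc 1 n, ∑ l ∈ Finset.Icc 1 n,
    if k = (j : ℤ) - (l : ℤ) then φ (((j:ℝ) - 1) / n, ((l:ℝ) - 1) / n) else 0|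
      ≤ ∑ j ∈ Finset.Icc 1 n, M := by
    refine (Finset.abs_sum_le_sum_abs _ _).trans (Finset.sum_le_sum fun j hj => ?_)
    by_cases h : ∃ m ∈ Finset.Icc 1 n, k = (j : ℤ) - (m : ℕ)
    · obtain ⟨m, hm, hk⟩ := h
      rw [inner_good n j m k (fun l => φ (((j:ℝ) - 1) / n, ((l:ℝ) - 1) / n)) hm hk]
      exact hM _ ⟨grid_mem n j hj, grid_mem n m hm⟩
    · rw [inner_bad n j k (fun l => φ (((j:ℝ) - 1) / n, ((l:ℝ) - 1) / n)) h]
      simpa using hM0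
  rw [Finset.sum_const, Nat.card_Icc, nsmul_eq_mul] at this
  simp only [Nat.add_sub_cancel] at this
  rw [div_mul_eq_mul_div, one_mul, div_le_iff₀ hn0]
  linarith

lemma diagMean_tendsto (φ : ℝ × ℝ → ℝ)
    (hφ : ContinuousOn φ (Set.Icc (0:ℝ) 1 ×ˢ Set.Icc (0:ℝ) 1)) (M : ℝ) (hM0 : 0 ≤ M)
    (hM : ∀ x ∈ Set.Icc (0:ℝ) 1 ×ˢ Set.Icc (0:ℝ) 1, |φ x| ≤ M) (k : ℤ) :
    Tendsto (fun n => diagMean φ n k) atTop (nhds (∫ t in (0:ℝ)..1, φ (t, t))) := by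
  have hR := riemann (fun t => φ (t, t))
    (hφ.comp (by fun_prop) (fun t ht => ⟨ht, ht⟩))
  have huc := (isCompact_Icc.prod isCompact_Icc).uniformContinuousOn_of_continuous hφ
  rw [Metric.uniformContinuousOn_iff] at huc
  have hdiff : Tendsto (fun n : ℕ => diagMean φ n k
      - (1 / (n : ℝ)) * ∑ j ∈ Finset.Icc 1 n, φ (((j : ℝ) - 1) / n, ((j : ℝ) - 1) / n))
      atTop (nhds 0) := by
    rw [Metric.tendsto_atTop]
    intro ε hε
    obtain ⟨δ, hδ, hd⟩ := huc (ε / 2) (by positivity)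
    obtain ⟨N, hN⟩ := exists_nat_gt (k.natAbs / δ)
    obtain ⟨N', hN'⟩ := exists_nat_gt (2 * k.natAbs * M / (ε / 2))
    refine ⟨N + N' + 1, fun n hn => ?_⟩
    have hn0 : (0 : ℝ) < n := by
      have : 0 < n := by omega
      exact_mod_cast this
    have hnδ : (k.natAbs : ℝ) / n < δ := by
      have : (N : ℝ) ≤ n := by exact_mod_cast (by omega : N ≤ n)
      rw [div_lt_iff₀ hn0]
      rw [div_lt_iff₀ hδ] at hN
      nlinarith
    have hnε : 2 * k.natAbs * M < ε / 2 * n := by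
      have : (N' : ℝ) ≤ n := by exact_mod_cast (by omega : N' ≤ n)
      rw [div_lt_iff₀ (by positivity)] at hN'
      nlinarith
    rw [dist_zero_right, Real.norm_eq_abs]
    unfold diagMean
    rw [← mul_sub, ← Finset.sum_sub_distrib, abs_mul, abs_of_pos (by positivity)]
    set B := Finset.Icc 1 k.natAbs ∪ Finset.Ioc (n - k.natAbs) n with hB
    have hBcard : (B.card : ℝ) ≤ 2 * k.natAbs := by
      have : B.card ≤ 2 * k.natAbs := by
        refine (Finset.card_union_le _ _).trans ?_
        rw [Nat.card_Icc, Nat.card_Ioc]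
        omega
      exact_mod_cast this
    have hterm : ∀ j ∈ Finset.Icc 1 n, |(∑ l ∈ Finset.Icc 1 n,
        if k = (j : ℤ) - (l : ℤ) then φ (((j:ℝ) - 1) / n, ((l:ℝ) - 1) / n) else 0)
        - φ (((j : ℝ) - 1) / n, ((j : ℝ) - 1) / n)| ≤ ε / 2 + if j ∈ B then M else 0 := by
      intro j hj
      by_cases h : ∃ m ∈ Finset.Icc 1 n, k = (j : ℤ) - (m : ℕ)
      · obtain ⟨m, hm, hk⟩ := h
        rw [inner_good n j m k (fun l => φ (((j:ℝ) - 1) / n, ((l:ℝ) - 1) / n)) hm hk]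
        have h0 : (0 : ℝ) ≤ if j ∈ B then M else 0 := by split_ifs <;> simp [hM0]
        have h1 := hd (((j : ℝ) - 1) / n, ((m : ℝ) - 1) / n)
          ⟨grid_mem n j hj, grid_mem n m hm⟩ (((j : ℝ) - 1) / n, ((j : ℝ) - 1) / n)
          ⟨grid_mem n j hj, grid_mem n j hj⟩ (by
            rw [Prod.dist_eq, dist_self, max_lt_iff]
            refine ⟨hδ, ?_⟩
            have e : ((m : ℝ) - 1) / n - ((j : ℝ) - 1) / n = -((k : ℝ) / n) := by
              rw [hk]; push_cast; ring
            rw [Real.dist_eq, e, abs_neg, abs_div, abs_of_pos hn0, ← Int.cast_abs,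
              Int.abs_eq_natAbs]
            exact hnδ)
        rw [Real.dist_eq] at h1
        linarith
      · rw [inner_bad n j k (fun l => φ (((j:ℝ) - 1) / n, ((l:ℝ) - 1) / n)) h]
        have hjB : j ∈ B := by
          by_contra hjB
          apply h
          rw [Finset.mem_Icc] at hj
          simp only [hB, Finset.mem_union, Finset.mem_Icc, Finset.mem_Ioc] at hjB
          refine ⟨((j : ℤ) - k).toNat, ?_, ?_⟩
          · rw [Finset.mem_Icc]; omega
          · omega
        rw [if_pos hjB, zero_sub, abs_neg]
        have := hM (((j : ℝ) - 1) / n, ((j : ℝ) - 1) / n) ⟨grid_mem n j hj, grid_mem n j hj⟩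
        linarith
    have htot := (Finset.abs_sum_le_sum_abs _ _).trans (Finset.sum_le_sum hterm)
    rw [Finset.sum_add_distrib, Finset.sum_const, Nat.card_Icc, nsmul_eq_mul,
      ← Finset.sum_filter, Finset.sum_const, nsmul_eq_mul, Nat.add_sub_cancel] at htot
    have hc : (((Finset.Icc 1 n).filter (· ∈ B)).card : ℝ) ≤ 2 * k.natAbs := by
      refine le_trans ?_ hBcard
      exact_mod_cast Finset.card_le_card (fun x hx => (Finset.mem_filter.1 hx).2)
    have hc2 := mul_le_mul_of_nonneg_right hc hM0
    rw [div_mul_eq_mul_div, one_mul, div_lt_iff₀ hn0]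
    linarith
  simpa using hdiff.add hR

theorem stmt16 (H : ℝ) (hH : H ∈ Set.Ioo (1/2 : ℝ) (3/4)) (φ : ℝ × ℝ → ℝ)
    (hφ : ContinuousOn φ (Set.Icc (0:ℝ) 1 ×ˢ Set.Icc (0:ℝ) 1)) :
    Tendsto
      (fun n : ℕ => (1 / (n:ℝ)) * ∑ j ∈ Finset.Icc 1 n, ∑ l ∈ Finset.Icc 1 n,
        (rhoH H ((j:ℤ) - (l:ℤ))) ^ 2 * φ (((j:ℝ) - 1) / n, ((l:ℝ) - 1) / n))
      atTop
      (nhds ((∑' k : ℤ, (rhoH H k) ^ 2) * ∫ t in (0:ℝ)..1, φ (t, t))) := by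
  obtain ⟨M, hM⟩ := (isCompact_Icc.prod isCompact_Icc).exists_bound_of_continuousOn hφ
  have hM0 : 0 ≤ M := (norm_nonneg _).trans (hM (0, 0) (by simp))
  have hs := summable_rho H hH
  have key := tendsto_tsum_of_dominated_convergence
    (f := fun (n : ℕ) (k : ℤ) => rhoH H k ^ 2 * diagMean φ n k)
    (g := fun k => rhoH H k ^ 2 * ∫ t in (0:ℝ)..1, φ (t, t))
    (bound := fun k => rhoH H k ^ 2 * M) (𝓕 := atTop) (hs.mul_right M)
    (fun k => (diagMean_tendsto φ hφ M hM0 hM k).const_mul _)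
    (Eventually.of_forall fun n k => by
      rw [norm_mul, Real.norm_eq_abs, abs_of_nonneg (sq_nonneg _)]
      exact mul_le_mul_of_nonneg_left (diagMean_bound φ M hM0 hM n k) (sq_nonneg _))
  rw [tsum_mul_right] at key
  refine key.congr (fun n => ?_)
  have hh : ∀ j l : ℕ, HasSum (fun k : ℤ => rhoH H k ^ 2 *
      (if k = (j : ℤ) - (l : ℤ) then φ (((j:ℝ) - 1) / n, ((l:ℝ) - 1) / n) else 0))
      ((rhoH H ((j:ℤ) - (l:ℤ))) ^ 2 * φ (((j:ℝ) - 1) / n, ((l:ℝ) - 1) / n)) := by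
    intro j l
    have := hasSum_single (f := fun k : ℤ => rhoH H k ^ 2 *
      (if k = (j : ℤ) - (l : ℤ) then φ (((j:ℝ) - 1) / n, ((l:ℝ) - 1) / n) else 0))
      ((j : ℤ) - (l : ℤ)) (fun k hk => by simp [hk])
    simpa using this
  have h2 := (hasSum_sum (s := Finset.Icc 1 n) fun j _ =>
    hasSum_sum (s := Finset.Icc 1 n) fun l _ => hh j l).mul_left (1 / (n : ℝ))
  rw [← h2.tsum_eq]
  refine tsum_congr (fun k => ?_)
  unfold diagMean
  simp only [← Finset.mul_sum]
  ring
end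

section
/- Let H ∈ (1/2, 1). There exists a constant C depending only on H such that for every integer n ≥ 1, sup_{τ ∈ [0,1], 1 ≤ k ≤ n} | ∫₀^τ ( n ∫_{(k−1)/n}^{k/n} |r−s|^{2H−2} dr − |(k−1)/n − s|^{2H−2} ) ds | ≤ C · n^{1−2H}. In particular this supremum tends to 0 as n → ∞. -/
/-- Interval integrability of `|x|^p`. -/
lemma absPow_intervalIntegrable {p : ℝ} (hp : -1 < p) (a b : ℝ) :
    IntervalIntegrable (fun x : ℝ => |x| ^ p) MeasureTheory.volume a b := by
  apply intervalIntegrable_of_even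
  · intro x; simp
  · intro x hx
    refine (intervalIntegral.intervalIntegrable_rpow' (a := 0) (b := x) hp).congr ?_
    intro y hy
    rw [Set.uIoc_of_le hx.le] at hy
    simp only [abs_of_pos hy.1]
  · exact enorm_ne_top
  · exact enorm_ne_top

/-- The odd antiderivative of `|x|^(q-1)`. -/
noncomputable def oddPow (q x : ℝ) : ℝ := (max x 0) ^ q / q - (max (-x) 0) ^ q / q

lemma oddPow_continuous {q : ℝ} (hq : 0 < q) : Continuous (oddPow q) := by
  unfold oddPow
  refine Continuous.sub (Continuous.div_const ?_ _) (Continuous.div_const ?_ _)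
  · exact Continuous.rpow_const (by fun_prop) (fun _ => Or.inr hq.le)
  · exact Continuous.rpow_const (by fun_prop) (fun _ => Or.inr hq.le)

lemma oddPow_hasDerivAt {q : ℝ} (hq : 0 < q) {x : ℝ} (hx : x ≠ 0) :
    HasDerivAt (oddPow q) (|x| ^ (q - 1)) x := by
  rcases lt_or_gt_of_ne hx with h | h
  · have h1 : HasDerivAt (fun y : ℝ => -((-y) ^ q / q)) (|x| ^ (q - 1)) x := by
      have := ((((hasDerivAt_id x).neg).rpow_const (p := q)
        (Or.inl (by simpa using hx))).div_const q).neg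
      refine this.congr_deriv ?_
      rw [abs_of_neg h]
      simp
      field_simp
    refine h1.congr_of_eventuallyEq ?_
    filter_upwards [gt_mem_nhds h] with y hy
    have h2 : (0:ℝ) ≤ -y := by linarith
    simp [oddPow, max_eq_right hy.le, max_eq_left h2, Real.zero_rpow hq.ne']
  · have h1 : HasDerivAt (fun y : ℝ => (y ^ q / q)) (|x| ^ (q - 1)) x := by
      have := (((hasDerivAt_id x).rpow_const (p := q) (Or.inl hx)).div_const q)
      refine this.congr_deriv ?_
      rw [abs_of_pos h]
      simp
      field_simp
    refine h1.congr_of_eventuallyEq ?_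
    filter_upwards [lt_mem_nhds h] with y hy
    have h2 : -y ≤ (0:ℝ) := by linarith
    simp [oddPow, max_eq_left hy.le, max_eq_right h2, Real.zero_rpow hq.ne']

lemma integral_absPow {q : ℝ} (hq : 0 < q) (a b : ℝ) :
    ∫ x in a..b, |x| ^ (q - 1) = oddPow q b - oddPow q a := by
  refine MeasureTheory.integral_eq_of_hasDerivAt_off_countable (oddPow q) _
    (Set.countable_singleton 0) (oddPow_continuous hq).continuousOn ?_
    (absPow_intervalIntegrable (by linarith) a b)
  intro x hx
  exact oddPow_hasDerivAt hq hx.2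

lemma abs_rpow_sub_le {q u v : ℝ} (hq : 0 < q) (hq1 : q ≤ 1) (hu : 0 ≤ u) (hv : 0 ≤ v) :
    |u ^ q - v ^ q| ≤ |u - v| ^ q := by
  wlog h : v ≤ u generalizing u v
  · rw [abs_sub_comm, abs_sub_comm u v]
    exact this hv hu (le_of_not_ge h)
  have h1 := NNReal.rpow_add_le_add_rpow ⟨u - v, sub_nonneg.2 h⟩ ⟨v, hv⟩ hq.le hq1
  have h2 : (u - v + v) ^ q ≤ (u - v) ^ q + v ^ q := by exact_mod_cast h1
  rw [sub_add_cancel] at h2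
  have h3 : v ^ q ≤ u ^ q := Real.rpow_le_rpow hv h hq.le
  rw [abs_of_nonneg (sub_nonneg.2 h3), abs_of_nonneg (sub_nonneg.2 h)]
  linarith

lemma oddPow_holder {q : ℝ} (hq : 0 < q) (hq1 : q ≤ 1) (x y : ℝ) :
    |oddPow q x - oddPow q y| ≤ 2 / q * |x - y| ^ q := by
  have h1 : |(max x 0) ^ q - (max y 0) ^ q| ≤ |x - y| ^ q :=
    (abs_rpow_sub_le hq hq1 (le_max_right _ _) (le_max_right _ _)).trans
      (Real.rpow_le_rpow (abs_nonneg _) (abs_max_sub_max_le_abs _ _ _) hq.le)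
  have h2 : |(max (-x) 0) ^ q - (max (-y) 0) ^ q| ≤ |x - y| ^ q := by
    refine (abs_rpow_sub_le hq hq1 (le_max_right _ _) (le_max_right _ _)).trans
      (Real.rpow_le_rpow (abs_nonneg _) ((abs_max_sub_max_le_abs _ _ _).trans ?_) hq.le)
    rw [neg_sub_neg, abs_sub_comm]
  have h3 : oddPow q x - oddPow q y
      = (((max x 0) ^ q - (max y 0) ^ q) - ((max (-x) 0) ^ q - (max (-y) 0) ^ q)) / q := by
    unfold oddPow; ring
  rw [h3, abs_div, abs_of_pos hq, div_mul_eq_mul_div]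
  gcongr
  have := abs_sub ((max x 0) ^ q - (max y 0) ^ q) ((max (-x) 0) ^ q - (max (-y) 0) ^ q)
  linarith

lemma oddPow_avg {q : ℝ} (hq : 0 < q) (hq1 : q ≤ 1) {m a b : ℝ} (hm : 0 < m)
    (hab : b - a = 1 / m) :
    |m * (∫ x in a..b, oddPow q x) - oddPow q a| ≤ 2 / q * m ^ (-q) := by
  have hle : a ≤ b := by have : 0 < 1 / m := by positivity
                         linarith
  have h1 : m * (∫ x in a..b, oddPow q x) - oddPow q a
      = m * ∫ x in a..b, (oddPow q x - oddPow q a) := by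
    rw [intervalIntegral.integral_sub ((oddPow_continuous hq).intervalIntegrable _ _) (by simp)]
    simp only [intervalIntegral.integral_const, hab, smul_eq_mul]
    field_simp
  have h2 : ‖∫ x in a..b, (oddPow q x - oddPow q a)‖ ≤ (2 / q * m ^ (-q)) * |b - a| := by
    apply intervalIntegral.norm_integral_le_of_norm_le_const
    intro x hx
    rw [Set.uIoc_of_le hle] at hx
    refine (oddPow_holder hq hq1 x a).trans ?_
    rw [Real.rpow_neg hm.le, ← Real.inv_rpow hm.le]
    gcongr
    rw [abs_of_pos (sub_pos.2 hx.1), ← one_div, ← hab]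
    linarith [hx.2]
  rw [h1, abs_mul, abs_of_pos hm]
  rw [hab, abs_of_pos (by positivity), Real.norm_eq_abs] at h2
  calc _ ≤ m * (2 / q * m ^ (-q) * (1 / m)) := by gcongr
    _ = _ := by field_simp

lemma main_bound {q : ℝ} (hq : 0 < q) (hq1 : q ≤ 1) {m a b : ℝ} (hm : 0 < m)
    (hab : b - a = 1 / m) (τ : ℝ) :
    |∫ s in (0:ℝ)..τ, (m * (∫ r in a..b, |r - s| ^ (q - 1)) - |a - s| ^ (q - 1))|
      ≤ 4 / q * m ^ (-q) := by
  have hc := oddPow_continuous hq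
  have hi : ∀ s : ℝ, (∫ r in a..b, |r - s| ^ (q - 1)) = oddPow q (b - s) - oddPow q (a - s) := by
    intro s
    rw [intervalIntegral.integral_comp_sub_right (fun x => |x| ^ (q - 1)), integral_absPow hq]
  simp only [hi]
  have hint : IntervalIntegrable (fun s : ℝ => |a - s| ^ (q - 1)) MeasureTheory.volume 0 τ := by
    have := (absPow_intervalIntegrable (p := q - 1) (by linarith) (a - 0) (a - τ)).comp_sub_left a
    simpa using this
  have hb : IntervalIntegrable (fun s : ℝ => oddPow q (b - s)) MeasureTheory.volume 0 τ :=
    (hc.comp (by fun_prop)).intervalIntegrable _ _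
  have ha : IntervalIntegrable (fun s : ℝ => oddPow q (a - s)) MeasureTheory.volume 0 τ :=
    (hc.comp (by fun_prop)).intervalIntegrable _ _
  rw [intervalIntegral.integral_sub ((hb.sub ha).const_mul m) hint,
    intervalIntegral.integral_const_mul, intervalIntegral.integral_sub hb ha,
    intervalIntegral.integral_comp_sub_left (oddPow q),
    intervalIntegral.integral_comp_sub_left (oddPow q),
    intervalIntegral.integral_comp_sub_left (fun x => |x| ^ (q - 1)), integral_absPow hq,
    intervalIntegral.integral_interval_sub_interval_comm' (hc.intervalIntegrable _ _)
      (hc.intervalIntegrable _ _) (hc.intervalIntegrable _ _)]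
  simp only [sub_zero]
  have h1 := oddPow_avg hq hq1 hm hab
  have h2 := oddPow_avg hq hq1 (a := a - τ) (b := b - τ) hm (by linarith)
  have h3 := abs_sub (m * (∫ x in a..b, oddPow q x) - oddPow q a)
    (m * (∫ x in (a - τ)..(b - τ), oddPow q x) - oddPow q (a - τ))
  have h4 : 4 / q * m ^ (-q) = 2 / q * m ^ (-q) + 2 / q * m ^ (-q) := by ring
  rw [h4]
  refine le_trans (le_of_eq ?_) (h3.trans (add_le_add h1 h2))
  congr 1
  ring


/-- For `H ∈ (1/2,1)` there is a constant `C` depending only on `H` such that for every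
`n ≥ 1`, `sup_{τ∈[0,1], 1≤k≤n} |∫₀^τ (n∫_{(k−1)/n}^{k/n} |r−s|^{2H−2} dr − |(k−1)/n − s|^{2H−2}) ds|
≤ C n^{1−2H}`; in particular this supremum tends to `0` as `n → ∞`. -/
theorem stmt17 (H : ℝ) (hH : H ∈ Set.Ioo (1/2 : ℝ) 1) :
    ∃ C : ℝ, 0 < C ∧
      (∀ n : ℕ, 1 ≤ n → ∀ k : ℕ, 1 ≤ k → k ≤ n → ∀ τ ∈ Set.Icc (0:ℝ) 1,
        |∫ s in (0:ℝ)..τ,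
            ((n:ℝ) * (∫ r in (((k:ℝ) - 1) / n)..((k:ℝ) / n), |r - s| ^ (2 * H - 2))
              - |((k:ℝ) - 1) / n - s| ^ (2 * H - 2))|
          ≤ C * (n:ℝ) ^ (1 - 2 * H)) ∧
      (∀ ε > (0:ℝ), ∃ N : ℕ, ∀ n : ℕ, N ≤ n → 1 ≤ n → ∀ k : ℕ, 1 ≤ k → k ≤ n →
        ∀ τ ∈ Set.Icc (0:ℝ) 1,
        |∫ s in (0:ℝ)..τ,
            ((n:ℝ) * (∫ r in (((k:ℝ) - 1) / n)..((k:ℝ) / n), |r - s| ^ (2 * H - 2))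
              - |((k:ℝ) - 1) / n - s| ^ (2 * H - 2))| ≤ ε) := by
  obtain ⟨hH1, hH2⟩ := hH
  have hq : 0 < 2 * H - 1 := by linarith
  have key : ∀ n : ℕ, 1 ≤ n → ∀ k : ℕ, 1 ≤ k → k ≤ n → ∀ τ ∈ Set.Icc (0:ℝ) 1,
        |∫ s in (0:ℝ)..τ,
            ((n:ℝ) * (∫ r in (((k:ℝ) - 1) / n)..((k:ℝ) / n), |r - s| ^ (2 * H - 2))
              - |((k:ℝ) - 1) / n - s| ^ (2 * H - 2))|
          ≤ 4 / (2 * H - 1) * (n:ℝ) ^ (1 - 2 * H) := by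
    intro n hn k _ _ τ _
    have hm : (0:ℝ) < n := by exact_mod_cast hn
    have := main_bound hq (by linarith) (a := ((k:ℝ) - 1) / n) (b := (k:ℝ) / n) hm
      (by ring) τ
    rwa [show 2 * H - 1 - 1 = 2 * H - 2 by ring, show -(2 * H - 1) = 1 - 2 * H by ring] at this
  refine ⟨4 / (2 * H - 1), by positivity, key, ?_⟩
  intro ε hε
  have ht : Filter.Tendsto (fun n : ℕ => 4 / (2 * H - 1) * (n:ℝ) ^ (-(2 * H - 1)))
      Filter.atTop (nhds (4 / (2 * H - 1) * 0)) :=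
    ((tendsto_rpow_neg_atTop hq).comp tendsto_natCast_atTop_atTop).const_mul _
  rw [mul_zero] at ht
  obtain ⟨N, hN⟩ := Filter.eventually_atTop.1 (ht.eventually (gt_mem_nhds hε))
  refine ⟨N, fun n hNn hn k hk hkn τ hτ => (key n hn k hk hkn τ hτ).trans ?_⟩
  have := hN n hNn
  rw [show -(2 * H - 1) = 1 - 2 * H by ring] at this
  exact this.le
end

section
/- Let H ∈ (1/2, 1). There exists a constant C_H depending only on H such that for every integer n ≥ 1, | n^{2H} ∫₀¹ ∫₀¹ tⁿ sⁿ |t−s|^{2H−2} ds dt − Γ(2H−1) | ≤ C_H · n^{−1}. -/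
open MeasureTheory Set

/-- Scaled real beta integral. -/
lemma aux_beta (a : ℝ) (ha : 0 < a) (n : ℕ) (t : ℝ) (ht : 0 < t) :
    ∫ s in (0:ℝ)..t, s ^ n * (t - s) ^ (a - 1)
      = t ^ ((n:ℝ) + a) * ProbabilityTheory.beta (n + 1) a := by
  have hC := Complex.betaIntegral_scaled ((n:ℂ) + 1) (a:ℂ) ht
  rw [Complex.betaIntegral_eq_Gamma_mul_div _ _ (by simp; positivity) (by simpa)] at hC
  have h1 : ∫ x in (0:ℝ)..t, (x : ℂ) ^ ((n:ℂ) + 1 - 1) * ((t : ℂ) - x) ^ ((a:ℂ) - 1)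
      = ((∫ s in (0:ℝ)..t, s ^ n * (t - s) ^ (a - 1) : ℝ) : ℂ) := by
    rw [← intervalIntegral.integral_ofReal]
    apply intervalIntegral.integral_congr
    intro x hx
    rw [uIcc_of_le ht.le] at hx
    simp only [add_sub_cancel_right, Complex.cpow_natCast]
    rw [Complex.ofReal_mul, Complex.ofReal_cpow (by linarith [hx.2])]
    push_cast
    rfl
  rw [h1] at hC
  have h2 : (t:ℂ) ^ ((n:ℂ) + 1 + a - 1) = ((t ^ ((n:ℝ) + a) : ℝ) : ℂ) := by
    rw [Complex.ofReal_cpow ht.le]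
    congr 1
    push_cast
    ring
  rw [h2] at hC
  have h3 : Complex.Gamma ((n:ℂ)+1) * Complex.Gamma a / Complex.Gamma ((n:ℂ)+1+a)
      = ((ProbabilityTheory.beta (n + 1) a : ℝ) : ℂ) := by
    unfold ProbabilityTheory.beta
    push_cast [← Complex.Gamma_ofReal]
    rfl
  rw [h3] at hC
  exact_mod_cast hC

lemma aux_intble (a : ℝ) (ha : 0 < a) (n : ℕ) (t : ℝ) :
    IntervalIntegrable (fun s : ℝ => s ^ n * (t - s) ^ (a - 1)) volume 0 t := by
  have h := (intervalIntegral.intervalIntegrable_rpow' (a := 0) (b := t)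
    (r := a - 1) (by linarith)).comp_sub_left t
  simp only [sub_zero, sub_self] at h
  exact h.symm.continuousOn_mul (by fun_prop)

/-- The kernel below the diagonal. -/
noncomputable def auxF (a : ℝ) (n : ℕ) (p : ℝ × ℝ) : ℝ :=
  if p.2 < p.1 then p.1 ^ n * (p.2 ^ n * (p.1 - p.2) ^ (a - 1)) else 0

lemma auxF_section (a : ℝ) (n : ℕ) (t : ℝ) :
    (fun s => auxF a n (t, s)) =
      (Iio t).indicator (fun s => t ^ n * (s ^ n * (t - s) ^ (a - 1))) := by
  funext s
  simp [auxF, indicator]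

lemma auxF_restrict (t : ℝ) (ht : t ∈ Ioc (0:ℝ) 1) :
    (volume.restrict (Ioc (0:ℝ) 1)).restrict (Iio t) = volume.restrict (Ioc 0 t) := by
  rw [Measure.restrict_restrict measurableSet_Iio]
  have : Iio t ∩ Ioc (0:ℝ) 1 = Ioo 0 t := by
    ext x
    simp only [mem_inter_iff, mem_Iio, mem_Ioc, mem_Ioo]
    constructor
    · rintro ⟨h1, h2, h3⟩
      exact ⟨h2, h1⟩
    · rintro ⟨h1, h2⟩
      exact ⟨h2, h1, by linarith [ht.2]⟩
  rw [this, Measure.restrict_congr_set Ioo_ae_eq_Ioc]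

lemma auxF_int (a : ℝ) (ha : 0 < a) (n : ℕ) (t : ℝ) (ht : t ∈ Ioc (0:ℝ) 1) :
    Integrable (fun s => auxF a n (t, s)) (volume.restrict (Ioc (0:ℝ) 1)) := by
  rw [auxF_section, integrable_indicator_iff measurableSet_Iio, IntegrableOn, auxF_restrict t ht]
  have := (aux_intble a ha n t).const_mul (t ^ n)
  rwa [intervalIntegrable_iff_integrableOn_Ioc_of_le ht.1.le] at this

lemma auxF_val (a : ℝ) (ha : 0 < a) (n : ℕ) (t : ℝ) (ht : t ∈ Ioc (0:ℝ) 1) :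
    ∫ s in Ioc (0:ℝ) 1, auxF a n (t, s)
      = t ^ (2 * (n:ℝ) + a) * ProbabilityTheory.beta (n + 1) a := by
  rw [auxF_section, integral_indicator measurableSet_Iio, auxF_restrict t ht,
    ← intervalIntegral.integral_of_le ht.1.le, intervalIntegral.integral_const_mul,
    aux_beta a ha n t ht.1, ← mul_assoc, ← Real.rpow_natCast t n, ← Real.rpow_add ht.1]
  congr 2
  ring

lemma auxF_nonneg (a : ℝ) (n : ℕ) (t s : ℝ) (ht : t ∈ Ioc (0:ℝ) 1) (hs : s ∈ Ioc (0:ℝ) 1) :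
    0 ≤ auxF a n (t, s) := by
  unfold auxF
  split_ifs with h
  · have h1 := ht.1.le
    have h2 := hs.1.le
    have h3 : 0 ≤ t - s := by simp only at h; linarith
    simp only
    positivity
  · exact le_rfl

lemma auxF_measurable (a : ℝ) (n : ℕ) : Measurable (auxF a n) := by
  unfold auxF
  refine Measurable.ite (measurableSet_lt measurable_snd measurable_fst) ?_ measurable_const
  fun_prop

lemma auxF_integrable (a : ℝ) (ha : 0 < a) (n : ℕ) :
    Integrable (auxF a n)
      ((volume.restrict (Ioc (0:ℝ) 1)).prod (volume.restrict (Ioc (0:ℝ) 1))) := by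
  rw [integrable_prod_iff (auxF_measurable a n).aestronglyMeasurable]
  constructor
  · filter_upwards [ae_restrict_mem measurableSet_Ioc] with t ht
    exact auxF_int a ha n t ht
  · have h1 : IntervalIntegrable
        (fun t : ℝ => t ^ (2 * (n:ℝ) + a) * ProbabilityTheory.beta (n + 1) a) volume 0 1 :=
      (intervalIntegral.intervalIntegrable_rpow' (by
        have : (0:ℝ) ≤ n := n.cast_nonneg
        linarith)).mul_const _
    rw [intervalIntegrable_iff_integrableOn_Ioc_of_le zero_le_one] at h1
    refine Integrable.congr h1 ?_
    filter_upwards [ae_restrict_mem measurableSet_Ioc] with t ht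
    rw [← auxF_val a ha n t ht]
    refine setIntegral_congr_fun measurableSet_Ioc fun s hs => ?_
    exact (Real.norm_of_nonneg (auxF_nonneg a n t s ht hs)).symm

lemma aux_double (a : ℝ) (ha : 0 < a) (n : ℕ) :
    ∫ t in Ioc (0:ℝ) 1, ∫ s in Ioc (0:ℝ) 1, auxF a n (t, s)
      = ProbabilityTheory.beta (n + 1) a / (2 * n + a + 1) := by
  rw [setIntegral_congr_fun measurableSet_Ioc (fun t ht => auxF_val a ha n t ht),
    ← intervalIntegral.integral_of_le zero_le_one, intervalIntegral.integral_mul_const,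
    integral_rpow]
  · have : (0:ℝ) ≤ n := n.cast_nonneg
    rw [Real.one_rpow, Real.zero_rpow (by positivity)]
    ring
  · left
    have : (0:ℝ) ≤ n := n.cast_nonneg
    linarith

lemma aux_total (a : ℝ) (ha : 0 < a) (ha1 : a < 1) (n : ℕ) :
    ∫ t in (0:ℝ)..1, ∫ s in (0:ℝ)..1, t ^ n * s ^ n * |t - s| ^ (a - 1)
      = 2 * (ProbabilityTheory.beta (n + 1) a / (2 * n + a + 1)) := by
  simp only [intervalIntegral.integral_of_le (zero_le_one' ℝ)]
  have hpt : ∀ t s : ℝ, t ^ n * s ^ n * |t - s| ^ (a - 1)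
      = auxF a n (t, s) + (auxF a n ∘ Prod.swap) (t, s) := by
    intro t s
    simp only [auxF, Function.comp, Prod.swap]
    rcases lt_trichotomy s t with h | h | h
    · rw [if_pos h, if_neg h.not_gt, abs_of_pos (by linarith)]
      ring
    · subst h
      simp [Real.zero_rpow (show a - 1 ≠ 0 by linarith)]
    · rw [if_neg h.not_gt, if_pos h, abs_of_neg (by linarith), neg_sub]
      ring
  simp only [hpt]
  have hF := auxF_integrable a ha n
  rw [integral_integral_add hF hF.swap]
  have hsw := integral_integral_swap (f := fun s t => auxF a n (s, t)) hF
  simp only [Function.comp, Prod.swap]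
  rw [← hsw, aux_double a ha n]
  ring

lemma aux_gamma_upper (a : ℝ) (ha : 0 < a) (ha1 : a < 1) (x : ℝ) (hx : 0 < x) :
    Real.Gamma (x + 1 + a) ≤ Real.Gamma (x + 1) * (x + 1) ^ a := by
  have h := Real.Gamma_mul_add_mul_le_rpow_Gamma_mul_rpow_Gamma (s := x + 1) (t := x + 2)
    (a := 1 - a) (b := a) (by linarith) (by linarith) (by linarith) ha (by ring)
  have hG : 0 < Real.Gamma (x + 1) := Real.Gamma_pos_of_pos (by linarith)
  have e : Real.Gamma (x + 2) = (x + 1) * Real.Gamma (x + 1) := by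
    rw [← Real.Gamma_add_one (by linarith)]
    congr 1
    ring
  rw [e, Real.mul_rpow (by linarith) hG.le] at h
  have e2 : Real.Gamma (x + 1) ^ (1 - a) * Real.Gamma (x + 1) ^ a = Real.Gamma (x + 1) := by
    rw [← Real.rpow_add hG]
    simp
  calc Real.Gamma (x + 1 + a) = Real.Gamma ((1 - a) * (x + 1) + a * (x + 2)) := by
        congr 1
        ring
    _ ≤ _ := h
    _ = (Real.Gamma (x + 1) ^ (1 - a) * Real.Gamma (x + 1) ^ a) * (x + 1) ^ a := by ring
    _ = _ := by rw [e2]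

lemma aux_gamma_lower (a : ℝ) (ha : 0 < a) (ha1 : a < 1) (x : ℝ) (hx : 0 < x) :
    Real.Gamma (x + 1) * x ^ a ≤ Real.Gamma (x + 1 + a) := by
  have h := Real.Gamma_mul_add_mul_le_rpow_Gamma_mul_rpow_Gamma (s := x + a) (t := x + 1 + a)
    (a := a) (b := 1 - a) (by linarith) (by linarith) ha (by linarith) (by ring)
  have hG : 0 < Real.Gamma (x + a) := Real.Gamma_pos_of_pos (by linarith)
  have e : Real.Gamma (x + 1 + a) = (x + a) * Real.Gamma (x + a) := by
    rw [← Real.Gamma_add_one (by linarith)]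
    congr 1
    ring
  have hxa : 0 < x + a := by linarith
  have e1 : a * (x + a) + (1 - a) * (x + 1 + a) = x + 1 := by ring
  rw [e1, e, Real.mul_rpow hxa.le hG.le] at h
  have e2 : Real.Gamma (x + a) ^ a * Real.Gamma (x + a) ^ (1 - a) = Real.Gamma (x + a) := by
    rw [← Real.rpow_add hG]
    simp
  have e3 : (x + a) ^ (1 - a) * (x + a) ^ a = x + a := by
    rw [← Real.rpow_add hxa]
    simp
  have h4 : x ^ a ≤ (x + a) ^ a := Real.rpow_le_rpow hx.le (by linarith) ha.le
  have hG1 : 0 < Real.Gamma (x + 1) := Real.Gamma_pos_of_pos (by linarith)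
  calc Real.Gamma (x + 1) * x ^ a ≤ Real.Gamma (x + 1) * (x + a) ^ a := by gcongr
    _ ≤ (Real.Gamma (x + a) ^ a * ((x + a) ^ (1 - a) * Real.Gamma (x + a) ^ (1 - a)))
          * (x + a) ^ a := by gcongr
    _ = (Real.Gamma (x + a) ^ a * Real.Gamma (x + a) ^ (1 - a))
          * ((x + a) ^ (1 - a) * (x + a) ^ a) := by ring
    _ = _ := by rw [e2, e3, e]; ring

lemma aux_ratio (a : ℝ) (ha : 0 < a) (ha1 : a < 1) (x : ℝ) (hx : 1 ≤ x) :
    |x ^ (a + 1) * (2 * (ProbabilityTheory.beta (x + 1) a / (2 * x + a + 1))) - Real.Gamma a|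
      ≤ 2 * Real.Gamma a * x⁻¹ := by
  have hx0 : 0 < x := by linarith
  have hGa := Real.Gamma_pos_of_pos ha
  have hG1 : 0 < Real.Gamma (x + 1) := Real.Gamma_pos_of_pos (by linarith)
  have hG2 : 0 < Real.Gamma (x + 1 + a) := Real.Gamma_pos_of_pos (by linarith)
  have hu := aux_gamma_upper a ha ha1 x hx0
  have hl := aux_gamma_lower a ha ha1 x hx0
  set R := x ^ a * Real.Gamma (x + 1) / Real.Gamma (x + 1 + a) with hR
  have hR1 : R ≤ 1 := by
    rw [hR, div_le_one hG2]
    linarith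
  have hR0 : x / (x + 1) ≤ R := by
    have h1 : x / (x + 1) ≤ (x / (x + 1)) ^ a := by
      have := Real.rpow_le_rpow_of_exponent_ge (x := x / (x + 1)) (by positivity)
        (by rw [div_le_one (by linarith)]; linarith) ha1.le
      rwa [Real.rpow_one] at this
    refine h1.trans ?_
    rw [Real.div_rpow hx0.le (by linarith), hR,
      div_le_div_iff₀ (Real.rpow_pos_of_pos (by linarith) _) hG2]
    have : 0 < x ^ a := Real.rpow_pos_of_pos hx0 _
    nlinarith
  have key : x ^ (a + 1) * (2 * (ProbabilityTheory.beta (x + 1) a / (2 * x + a + 1)))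
      = Real.Gamma a * (R * (2 * x / (2 * x + a + 1))) := by
    rw [Real.rpow_add hx0, Real.rpow_one, ProbabilityTheory.beta, hR]
    ring
  have hq1 : 2 * x / (2 * x + a + 1) ≤ 1 := by
    rw [div_le_one (by linarith)]
    linarith
  have hq0 : x / (x + 1) ≤ 2 * x / (2 * x + a + 1) := by
    rw [div_le_div_iff₀ (by linarith) (by linarith)]
    nlinarith
  have hy : 1 - x⁻¹ ≤ x / (x + 1) := by
    rw [le_div_iff₀ (by linarith)]
    have : x⁻¹ * x = 1 := inv_mul_cancel₀ hx0.ne'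
    have h2 : 0 < x⁻¹ := by positivity
    nlinarith
  have hy0 : 0 ≤ x / (x + 1) := by positivity
  set q := 2 * x / (2 * x + a + 1)
  have hP1 : R * q ≤ 1 := mul_le_one₀ hR1 (hy0.trans hq0) hq1
  have hP0 : 1 - 2 * x⁻¹ ≤ R * q := by
    nlinarith [mul_nonneg (sub_nonneg.2 hR1) (sub_nonneg.2 hq1)]
  rw [key, abs_le]
  constructor
  · nlinarith
  · have : 0 < x⁻¹ := by positivity
    have h3 : 0 < Real.Gamma a * x⁻¹ := by positivity
    nlinarith

/-- For `H ∈ (1/2,1)` there is a constant `C_H` such that for every `n ≥ 1`,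
`|n^{2H} ∫₀¹∫₀¹ tⁿsⁿ|t−s|^{2H−2} ds dt − Γ(2H−1)| ≤ C_H / n`. -/
theorem stmt18 (H : ℝ) (hH : H ∈ Set.Ioo (1/2 : ℝ) 1) :
    ∃ C : ℝ, 0 < C ∧ ∀ n : ℕ, 1 ≤ n →
      |(n:ℝ) ^ (2 * H) * (∫ t in (0:ℝ)..1, ∫ s in (0:ℝ)..1, t ^ n * s ^ n * |t - s| ^ (2 * H - 2))
          - Real.Gamma (2 * H - 1)|
        ≤ C * (n:ℝ)⁻¹ := by
  obtain ⟨h1, h2⟩ := hH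
  have ha : 0 < 2 * H - 1 := by linarith
  have ha1 : 2 * H - 1 < 1 := by linarith
  refine ⟨2 * Real.Gamma (2 * H - 1), by have := Real.Gamma_pos_of_pos ha; positivity, ?_⟩
  intro n hn
  have h := aux_ratio (2 * H - 1) ha ha1 n (by exact_mod_cast hn)
  rw [← aux_total (2 * H - 1) ha ha1 n] at h
  have e1 : 2 * H - 1 + 1 = 2 * H := by ring
  have e2 : 2 * H - 1 - 1 = 2 * H - 2 := by ring
  rw [e1, e2] at h
  exact h
end

section
/- Let H ∈ (1/2, 3/4). Then lim_{n→∞} n^{1−2H} Σ_{1 ≤ i < h ≤ n} | ρ_H(i) · ρ_H(h) · ρ_H(i−h) | = 0. -/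
open Filter

lemma rho_bound (H : ℝ) (hH : H ∈ Set.Ioo (1/2 : ℝ) (3/4)) (k : ℕ) (hk : 1 ≤ k) :
    |rhoH H (k:ℤ)| ≤ (k:ℝ) ^ (2 * H - 2) := by
  obtain ⟨h1, h2⟩ := hH
  have hk0 : (0:ℝ) < k := by exact_mod_cast hk
  have hk1 : (1:ℝ) ≤ k := by exact_mod_cast hk
  obtain ⟨s, hs⟩ : ∃ s : ℝ, s = 1 / (k:ℝ) := ⟨_, rfl⟩
  have hs0 : 0 < s := by rw [hs]; positivity
  have hs1 : s ≤ 1 := by rw [hs, div_le_one hk0]; exact hk1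
  have hks : (k:ℝ) * s = 1 := by rw [hs]; field_simp
  have key : ∀ t : ℝ, -1 ≤ t → 1 + (2*H) * t ≤ (1 + t) ^ (2*H) ∧
      (1 + t) ^ (2*H) ≤ (1 + t) * (1 + (2*H-1) * t) := by
    intro t ht
    refine ⟨one_add_mul_self_le_rpow_one_add ht (by linarith), ?_⟩
    have hh := rpow_one_add_le_one_add_mul_self ht (p := 2*H-1) (by linarith) (by linarith)
    have e : (1 + t) ^ (2*H) = (1 + t) * (1 + t) ^ (2*H-1) := by
      have := Real.rpow_add_of_nonneg (x := 1 + t) (y := 1) (z := 2*H-1)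
        (by linarith) (by norm_num) (by linarith)
      rw [Real.rpow_one] at this
      rw [← this]; congr 1; ring
    rw [e]
    exact mul_le_mul_of_nonneg_left hh (by linarith)
  obtain ⟨a1, a2⟩ := key s (by linarith)
  obtain ⟨b1, b2⟩ := key (-s) (by linarith)
  have e : rhoH H (k:ℤ) =
      (k:ℝ) ^ (2*H) * ((1/2) * ((1 + s) ^ (2*H) - 2 + (1 + -s) ^ (2*H))) := by
    unfold rhoH
    push_cast
    have c1 : (k:ℝ) + 1 = k * (1 + s) := by rw [mul_add, hks]; ring
    have c2 : (k:ℝ) - 1 = k * (1 + -s) := by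
      have : (k:ℝ) * (1 + -s) = k - k * s := by ring
      rw [this, hks]
    rw [abs_of_nonneg (by linarith : (0:ℝ) ≤ (k:ℝ) + 1), abs_of_nonneg hk0.le,
      abs_of_nonneg (by linarith : (0:ℝ) ≤ (k:ℝ) - 1), c1, c2,
      Real.mul_rpow hk0.le (by linarith), Real.mul_rpow hk0.le (by linarith)]
    ring
  have e2 : (k:ℝ) ^ (2*H-2) = (k:ℝ) ^ (2*H) * s ^ 2 := by
    rw [Real.rpow_sub hk0, hs]
    norm_num
    rfl
  rw [e, e2, abs_mul, abs_of_nonneg (Real.rpow_nonneg hk0.le _)]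
  apply mul_le_mul_of_nonneg_left _ (Real.rpow_nonneg hk0.le _)
  rw [abs_le]
  constructor <;> nlinarith [sq_nonneg s]

lemma conv_bound (f : ℕ → ℝ) (hf : ∀ i, 0 ≤ f i) (n : ℕ) :
    ∑ h ∈ Finset.Icc 1 n, ∑ i ∈ Finset.Ico 1 h, f i * f (h - i) ≤
      (∑ i ∈ Finset.Icc 1 n, f i) ^ 2 := by
  rw [pow_two, Finset.sum_mul_sum, ← Finset.sum_product', Finset.sum_sigma']
  rw [← Finset.sum_image (f := fun x : ℕ × ℕ => f x.1 * f x.2)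
    (g := fun x : (_ : ℕ) × ℕ => (x.2, x.1 - x.2))]
  · apply Finset.sum_le_sum_of_subset_of_nonneg
    · intro x hx
      simp only [Finset.mem_image, Finset.mem_sigma, Finset.mem_Icc, Finset.mem_Ico] at hx
      obtain ⟨y, hy, rfl⟩ := hx
      simp only [Finset.mem_product, Finset.mem_Icc]
      omega
    · intro x _ _
      exact mul_nonneg (hf _) (hf _)
  · rintro ⟨a, b⟩ hx ⟨c, d⟩ hy hxy
    simp only [Finset.coe_sigma, Set.mem_sigma_iff, Finset.mem_coe, Finset.mem_Icc,
      Finset.mem_Ico, Prod.mk.injEq] at hx hy hxy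
    obtain ⟨h1, h2⟩ := hxy
    subst h1
    have : a = c := by omega
    subst this
    rfl

lemma sum_tendsto (p c : ℝ) (hc : 0 < c) (hpc : 1 < p + c) :
    Tendsto (fun n : ℕ => (n:ℝ) ^ (-c) * ∑ i ∈ Finset.Icc 1 n, (i:ℝ) ^ (-p))
      atTop (nhds 0) := by
  obtain ⟨d, hd, hdc⟩ := exists_between (max_lt hc (by linarith : 1 - p < c))
  obtain ⟨hd0, hd1⟩ := max_lt_iff.mp hd
  have hsum : Summable (fun i : ℕ => (i:ℝ) ^ (-(p+d))) :=
    Real.summable_nat_rpow.mpr (by linarith)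
  have hlim : Tendsto (fun n : ℕ => (n:ℝ) ^ (-(c-d)) * ∑' i : ℕ, (i:ℝ) ^ (-(p+d)))
      atTop (nhds 0) := by
    have := ((tendsto_rpow_neg_atTop (sub_pos.mpr hdc)).comp
      tendsto_natCast_atTop_atTop).mul_const (∑' i : ℕ, (i:ℝ) ^ (-(p+d)))
    simpa using this
  refine tendsto_of_tendsto_of_tendsto_of_le_of_le' tendsto_const_nhds hlim
    (Eventually.of_forall fun n => by positivity) ?_
  filter_upwards [eventually_ge_atTop 1] with n hn
  have hn0 : (0:ℝ) < n := by exact_mod_cast hn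
  have : ∑ i ∈ Finset.Icc 1 n, (i:ℝ) ^ (-p) ≤
      (n:ℝ) ^ d * ∑ i ∈ Finset.Icc 1 n, (i:ℝ) ^ (-(p+d)) := by
    rw [Finset.mul_sum]
    apply Finset.sum_le_sum
    intro i hi
    rw [Finset.mem_Icc] at hi
    have hi0 : (0:ℝ) < i := by exact_mod_cast hi.1
    have hin : (i:ℝ) ≤ n := by exact_mod_cast hi.2
    calc (i:ℝ) ^ (-p) = (i:ℝ) ^ d * (i:ℝ) ^ (-(p+d)) := by
          rw [← Real.rpow_add hi0]; congr 1; ring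
      _ ≤ _ := by gcongr
  calc (n:ℝ) ^ (-c) * ∑ i ∈ Finset.Icc 1 n, (i:ℝ) ^ (-p)
      ≤ (n:ℝ) ^ (-c) * ((n:ℝ) ^ d * ∑ i ∈ Finset.Icc 1 n, (i:ℝ) ^ (-(p+d))) := by gcongr
    _ = (n:ℝ) ^ (-(c-d)) * ∑ i ∈ Finset.Icc 1 n, (i:ℝ) ^ (-(p+d)) := by
        rw [← mul_assoc, ← Real.rpow_add hn0]; congr 2; ring
    _ ≤ _ := by
        apply mul_le_mul_of_nonneg_left _ (by positivity)
        exact hsum.sum_le_tsum _ (fun i _ => by positivity)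

/-- For `H ∈ (1/2,3/4)`,
`n^{1−2H} Σ_{1≤i<h≤n} |ρ_H(i)ρ_H(h)ρ_H(i−h)| → 0` as `n → ∞`. -/
theorem stmt19 (H : ℝ) (hH : H ∈ Set.Ioo (1/2 : ℝ) (3/4)) :
    Tendsto
      (fun n : ℕ => (n:ℝ) ^ (1 - 2 * H) *
        ∑ h ∈ Finset.Icc 1 n, ∑ i ∈ Finset.Ico 1 h,
          |rhoH H (i:ℤ) * rhoH H (h:ℤ) * rhoH H ((i:ℤ) - (h:ℤ))|)
      atTop (nhds 0) := by
  have hH' := hH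
  obtain ⟨h1, h2⟩ := hH'
  have hlim := (sum_tendsto (3 - 3 * H) (H - 1/2) (by linarith) (by linarith)).pow 2
  rw [zero_pow two_ne_zero] at hlim
  refine tendsto_of_tendsto_of_tendsto_of_le_of_le' tendsto_const_nhds hlim
    (Eventually.of_forall fun n => by positivity) ?_
  filter_upwards [eventually_ge_atTop 1] with n hn
  have hn0 : (0:ℝ) < n := by exact_mod_cast hn
  have e : ((n:ℝ) ^ (-(H - 1/2))) ^ 2 = (n:ℝ) ^ (1 - 2 * H) := by
    rw [← Real.rpow_natCast, ← Real.rpow_mul hn0.le]; congr 1; push_cast; ring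
  rw [mul_pow, e]
  apply mul_le_mul_of_nonneg_left _ (by positivity)
  refine le_trans ?_ (conv_bound (fun i => (i:ℝ) ^ (-(3 - 3 * H))) (fun i => by positivity) n)
  apply Finset.sum_le_sum
  intro h hh
  apply Finset.sum_le_sum
  intro i hi
  rw [Finset.mem_Ico] at hi
  obtain ⟨j, rfl⟩ : ∃ j, h = i + j := ⟨h - i, by omega⟩
  have hj : 1 ≤ j := by omega
  have hi0 : (0:ℝ) < i := by exact_mod_cast hi.1
  have hj0 : (0:ℝ) < j := by exact_mod_cast hj
  have hsym : rhoH H ((i:ℤ) - ((i + j : ℕ) : ℤ)) = rhoH H (j:ℤ) := by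
    unfold rhoH
    push_cast
    rw [show (i:ℝ) - (i + j) + 1 = -(j - 1) by ring, show (i:ℝ) - (i + j) - 1 = -(j + 1) by ring,
      show (i:ℝ) - (i + j) = -j by ring, abs_neg, abs_neg, abs_neg]
    ring
  rw [hsym, abs_mul, abs_mul, Nat.add_sub_cancel_left]
  have r1 := rho_bound H hH i hi.1
  have r2 := rho_bound H hH j hj
  have r3 := rho_bound H hH (i + j) (by omega)
  have split : ∀ x : ℝ, 0 < x → x ^ (-(3 - 3*H)) = x ^ (2*H-2) * x ^ (H-1) := by
    intro x hx
    rw [← Real.rpow_add hx]; congr 1; ring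
  have r4 : ((i + j : ℕ) : ℝ) ^ (2*H-2) ≤ (i:ℝ) ^ (H-1) * (j:ℝ) ^ (H-1) := by
    push_cast
    have e3 : ((i:ℝ) + j) ^ (2*H-2) = ((i:ℝ) + j) ^ (H-1) * ((i:ℝ) + j) ^ (H-1) := by
      rw [← Real.rpow_add (by positivity)]; congr 1; ring
    rw [e3]
    have u := Real.rpow_le_rpow_of_nonpos hi0 (by linarith : (i:ℝ) ≤ i + j)
      (by linarith : H - 1 ≤ 0)
    have v := Real.rpow_le_rpow_of_nonpos hj0 (by linarith : (j:ℝ) ≤ i + j)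
      (by linarith : H - 1 ≤ 0)
    gcongr
  have r5 := r3.trans r4
  calc |rhoH H (i:ℤ)| * |rhoH H ((i + j : ℕ) : ℤ)| * |rhoH H (j:ℤ)|
      ≤ (i:ℝ) ^ (2*H-2) * ((i:ℝ) ^ (H-1) * (j:ℝ) ^ (H-1)) * (j:ℝ) ^ (2*H-2) := by gcongr
    _ = _ := by
      rw [split _ hi0, split _ hj0]; ring
end
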